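/- arXiv:1401.4014 — 2 statements merged into one kernel-verified Lean document; each statement's English description precedes it below -/
import Mathlib

section
/- Fix c₀ > 0 and s, t ∈ ℝ, and let w(v) = t − (2/c₀)·√((v−s)² + 1), v₊(w₀) = s + √(c₀²(w₀−t)²/4 − 1), v₋(w₀) = s − √(c₀²(w₀−t)²/4 − 1). Let f : ℝ → ℝ be continuous with compact support contained in (0,π), and let φ : ℝ → ℝ be continuous with compact support contained in (−∞, t − 2/c₀). Then the double integral factorizes: ∫_{ℝ²} φ(w(v))·f(u)·1_{(0,π)}(u)·1_{[0,∞)}(v) du dv = (∫₀^π f(u) du) · ∫_{−∞}^{t−2/c₀} φ(w₀)·(c₀²/4)·((t−w₀)/√(c₀²(t−w₀)²/4 − 1))·(1_{[0,∞)}(v₋(w₀)) + 1_{[0,∞)}(v₊(w₀))) dw₀. -/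
open MeasureTheory Real

/-!
The integrand is a function of `u` times a function of `v`, so the double integral is a product of
two one-dimensional integrals, and the `u`-factor is `∫₀^π f`. In the `v`-factor the line is cut
at `v = s`, where the phase `w(v) = t - (2/c₀)√((v-s)² + 1)` has its maximum `t - 2/c₀`. On each of the two
open half-lines `w` is injective with range `(-∞, t - 2/c₀)` and inverse
`v± = s ± √(c₀²(t-w₀)²/4 - 1)`, whose derivative has absolute value
`(c₀²/4)(t-w₀)/√(c₀²(t-w₀)²/4 - 1)`. The change of variables `v = v±(w₀)`
(`integrableOn_branch`, `integral_branch`) gives the two terms of the right-hand side; they may be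
added because `φ ∘ w` is continuous with compact support (`integrable_comp_phase`).
-/

/-- The quantity under the root is positive below the maximum `t - 2/c₀` of the phase. -/
lemma radicand_pos {c₀ t w : ℝ} (hc : 0 < c₀) (hw : w < t - 2 / c₀) :
    0 < c₀ ^ 2 * (t - w) ^ 2 / 4 - 1 := by
  have h1 : 2 / c₀ < t - w := by linarith
  have h2 : 2 < c₀ * (t - w) := by
    rw [div_lt_iff₀ hc] at h1
    linarith
  nlinarith

/-- The branch `w ↦ s + σ√(c₀²(t-w)²/4 - 1)`, `σ = ±1`, is a right inverse of the phase. -/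
lemma phase_branch {c₀ t w : ℝ} (s σ : ℝ) (hσ : σ ^ 2 = 1) (hc : 0 < c₀)
    (hw : w < t - 2 / c₀) :
    t - 2 / c₀ * √((s + σ * √(c₀ ^ 2 * (t - w) ^ 2 / 4 - 1) - s) ^ 2 + 1) = w := by
  have hp := radicand_pos hc hw
  have h0 : 0 < 2 / c₀ := by positivity
  have h1 : (s + σ * √(c₀ ^ 2 * (t - w) ^ 2 / 4 - 1) - s) ^ 2 + 1 = (c₀ * (t - w) / 2) ^ 2 := by
    rw [add_sub_cancel_left, mul_pow, hσ, Real.sq_sqrt hp.le]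
    ring
  have h2 : 0 ≤ c₀ * (t - w) / 2 := by
    have : 0 ≤ t - w := by linarith
    positivity
  rw [h1, Real.sqrt_sq h2]
  field_simp
  ring

lemma hasDerivAt_branch {c₀ t w : ℝ} (s σ : ℝ) (hc : 0 < c₀) (hw : w < t - 2 / c₀) :
    HasDerivAt (fun w => s + σ * √(c₀ ^ 2 * (t - w) ^ 2 / 4 - 1))
      (-σ * (c₀ ^ 2 / 4 * ((t - w) / √(c₀ ^ 2 * (t - w) ^ 2 / 4 - 1)))) w := by
  have hp := radicand_pos hc hw
  have h1 : HasDerivAt (fun w => c₀ ^ 2 * (t - w) ^ 2 / 4 - 1) (-(c₀ ^ 2 * (t - w) / 2)) w := by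
    refine ((((((hasDerivAt_id' w).const_sub t).pow 2).const_mul (c₀ ^ 2)).div_const
      4).sub_const 1).congr_deriv ?_
    push_cast
    ring
  refine (((h1.sqrt hp.ne').const_mul σ).const_add s).congr_deriv ?_
  have h2 := (Real.sqrt_pos.2 hp).ne'
  generalize √(c₀ ^ 2 * (t - w) ^ 2 / 4 - 1) = r at h2 ⊢
  field_simp
  ring

lemma abs_deriv_branch {c₀ t w σ : ℝ} (hσ : σ ^ 2 = 1) (hc : 0 < c₀) (hw : w < t - 2 / c₀) :
    |-σ * (c₀ ^ 2 / 4 * ((t - w) / √(c₀ ^ 2 * (t - w) ^ 2 / 4 - 1)))| =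
      c₀ ^ 2 / 4 * ((t - w) / √(c₀ ^ 2 * (t - w) ^ 2 / 4 - 1)) := by
  have h0 : 0 < 2 / c₀ := by positivity
  have h1 : 0 ≤ t - w := by linarith
  have h2 : |σ| = 1 := by
    rw [← Real.sqrt_sq_eq_abs, hσ, Real.sqrt_one]
  rw [abs_mul, abs_neg, h2, one_mul, abs_of_nonneg (by positivity)]

lemma injOn_branch {c₀ : ℝ} (s t σ : ℝ) (hσ : σ ^ 2 = 1) (hc : 0 < c₀) :
    Set.InjOn (fun w => s + σ * √(c₀ ^ 2 * (t - w) ^ 2 / 4 - 1)) (Set.Iio (t - 2 / c₀)) := by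
  intro a ha b hb hab
  rw [← phase_branch s σ hσ hc ha, ← phase_branch s σ hσ hc hb]
  simp only at hab
  rw [hab]

lemma image_branch {c₀ : ℝ} (s t σ : ℝ) (hσ : σ ^ 2 = 1) (hc : 0 < c₀) :
    (fun w => s + σ * √(c₀ ^ 2 * (t - w) ^ 2 / 4 - 1)) '' Set.Iio (t - 2 / c₀) =
      {v | 0 < σ * (v - s)} := by
  ext v
  constructor
  · rintro ⟨w, hw, rfl⟩
    have := Real.sqrt_pos.2 (radicand_pos hc hw)
    simp only [Set.mem_ofPred_eq, add_sub_cancel_left, ← mul_assoc, ← sq, hσ]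
    linarith
  · intro hv
    have hv : 0 < σ * (v - s) := hv
    have hsq : (σ * (v - s)) ^ 2 = (v - s) ^ 2 := by rw [mul_pow, hσ, one_mul]
    have hpos : 0 < (v - s) ^ 2 := hsq ▸ pow_pos hv 2
    refine ⟨t - 2 / c₀ * √((v - s) ^ 2 + 1), ?_, ?_⟩
    · have h1 : 1 < √((v - s) ^ 2 + 1) := by
        rw [Real.lt_sqrt zero_le_one]
        linarith
      have h2 : 0 < 2 / c₀ := by positivity
      simp only [Set.mem_Iio]
      nlinarith
    · have h1 : c₀ ^ 2 * (t - (t - 2 / c₀ * √((v - s) ^ 2 + 1))) ^ 2 / 4 - 1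
          = (σ * (v - s)) ^ 2 := by
        rw [sub_sub_cancel, mul_pow, Real.sq_sqrt (by positivity), hsq]
        field_simp
        ring
      simp only [h1, Real.sqrt_sq hv.le]
      rw [← mul_assoc, ← sq, hσ]
      ring

/-- Change of variables along one branch of the inverse of the phase. -/
lemma integral_branch {c₀ : ℝ} (s t σ : ℝ) (hσ : σ ^ 2 = 1) (hc : 0 < c₀) (φ H : ℝ → ℝ) :
    ∫ v in {v | 0 < σ * (v - s)}, φ (t - 2 / c₀ * √((v - s) ^ 2 + 1)) * H v =
      ∫ w in Set.Iio (t - 2 / c₀),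
        φ w * (c₀ ^ 2 / 4 * ((t - w) / √(c₀ ^ 2 * (t - w) ^ 2 / 4 - 1))) *
          H (s + σ * √(c₀ ^ 2 * (t - w) ^ 2 / 4 - 1)) := by
  rw [← image_branch s t σ hσ hc, integral_image_eq_integral_abs_deriv_smul measurableSet_Iio
    (fun w hw => (hasDerivAt_branch s σ hc hw).hasDerivWithinAt) (injOn_branch s t σ hσ hc)]
  refine setIntegral_congr_fun measurableSet_Iio fun w hw => ?_
  simp only [phase_branch s σ hσ hc hw, abs_deriv_branch hσ hc hw, smul_eq_mul]
  ring

lemma integrableOn_branch {c₀ : ℝ} (s t σ : ℝ) (hσ : σ ^ 2 = 1) (hc : 0 < c₀) (φ H : ℝ → ℝ)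
    (hint : Integrable fun v => φ (t - 2 / c₀ * √((v - s) ^ 2 + 1)) * H v) :
    IntegrableOn (fun w => φ w * (c₀ ^ 2 / 4 * ((t - w) / √(c₀ ^ 2 * (t - w) ^ 2 / 4 - 1))) *
      H (s + σ * √(c₀ ^ 2 * (t - w) ^ 2 / 4 - 1))) (Set.Iio (t - 2 / c₀)) := by
  have h := (integrableOn_image_iff_integrableOn_abs_deriv_smul measurableSet_Iio
    (fun w hw => (hasDerivAt_branch s σ hc hw).hasDerivWithinAt) (injOn_branch s t σ hσ hc)
    (fun v => φ (t - 2 / c₀ * √((v - s) ^ 2 + 1)) * H v)).1 hint.integrableOn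
  refine h.congr_fun (fun w hw => ?_) measurableSet_Iio
  simp only [phase_branch s σ hσ hc hw, abs_deriv_branch hσ hc hw, smul_eq_mul]
  ring

/-- The phase tends to `-∞` at both ends of the line, so `φ ∘ w` inherits compact support. -/
lemma integrable_comp_phase {c₀ : ℝ} (s t : ℝ) (hc : 0 < c₀) {φ : ℝ → ℝ} (hφ : Continuous φ)
    (hφc : HasCompactSupport φ) :
    Integrable fun v => φ (t - 2 / c₀ * √((v - s) ^ 2 + 1)) := by
  have hcont : Continuous fun v => φ (t - 2 / c₀ * √((v - s) ^ 2 + 1)) := by fun_prop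
  refine hcont.integrable_of_hasCompactSupport ?_
  obtain ⟨R, hR⟩ := (Metric.isBounded_iff_subset_closedBall t).1 hφc.isCompact.isBounded
  refine HasCompactSupport.intro (isCompact_closedBall s (c₀ * R / 2)) fun v hv => ?_
  refine image_eq_zero_of_notMem_tsupport fun hmem => hv ?_
  have h1 := hR hmem
  rw [Metric.mem_closedBall, Real.dist_eq] at h1 ⊢
  have h2 : 2 / c₀ * √((v - s) ^ 2 + 1) ≤ R := by
    have := (abs_le.1 h1).1
    linarith
  have h3 : |v - s| ≤ √((v - s) ^ 2 + 1) := Real.abs_le_sqrt (by linarith)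
  rw [div_mul_eq_mul_div, div_le_iff₀ hc] at h2
  linarith

/-- Factorization of the (mollified) SAR forward operator on
the cylinder: for `f` continuous, compactly supported in `(0,π)`, and `φ`
continuous, compactly supported in `(−∞, t − 2/c₀)`, with
`w(v) = t − (2/c₀)√((v−s)² + 1)` and `v±(w₀) = s ± √(c₀²(w₀−t)²/4 − 1)`,
the double integral factorizes as
`(∫₀^π f)·∫_{w₀ < t−2/c₀} φ(w₀)·(c₀²/4)·(t−w₀)/√(c₀²(t−w₀)²/4 − 1)
  ·(1_{[0,∞)}(v₋(w₀)) + 1_{[0,∞)}(v₊(w₀))) dw₀`. -/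
theorem forward_operator_factorizes (c₀ s t : ℝ) (hc₀ : 0 < c₀)
    (f : ℝ → ℝ) (hf : Continuous f) (hfc : HasCompactSupport f)
    (hfsupp : tsupport f ⊆ Set.Ioo 0 π)
    (φ : ℝ → ℝ) (hφ : Continuous φ) (hφc : HasCompactSupport φ)
    (hφsupp : tsupport φ ⊆ Set.Iio (t - 2 / c₀)) :
    ∫ p : ℝ × ℝ,
        φ (t - (2 / c₀) * Real.sqrt ((p.2 - s) ^ 2 + 1)) * f p.1 *
          Set.indicator (Set.Ioo 0 π) (fun _ => (1 : ℝ)) p.1 *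
          Set.indicator (Set.Ici (0 : ℝ)) (fun _ => (1 : ℝ)) p.2 =
      (∫ u in (0:ℝ)..π, f u) *
        ∫ w₀ in Set.Iio (t - 2 / c₀),
          φ w₀ * ((c₀ ^ 2 / 4) *
              ((t - w₀) / Real.sqrt (c₀ ^ 2 * (t - w₀) ^ 2 / 4 - 1))) *
            (Set.indicator (Set.Ici (0 : ℝ)) (fun _ => (1 : ℝ))
                (s - Real.sqrt (c₀ ^ 2 * (w₀ - t) ^ 2 / 4 - 1)) +
             Set.indicator (Set.Ici (0 : ℝ)) (fun _ => (1 : ℝ))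
                (s + Real.sqrt (c₀ ^ 2 * (w₀ - t) ^ 2 / 4 - 1))) := by
  -- The two half-lines on which the phase is injective, written as in `integral_branch`.
  have hIoi : {v : ℝ | 0 < (1 : ℝ) * (v - s)} = Set.Ioi s := by
    ext v
    simp
  have hIio : {v : ℝ | 0 < (-1 : ℝ) * (v - s)} = Set.Iio s := by
    ext v
    simp
  set H : ℝ → ℝ := Set.indicator (Set.Ici (0 : ℝ)) (fun _ => (1 : ℝ)) with hH
  have hint : Integrable fun v => φ (t - 2 / c₀ * √((v - s) ^ 2 + 1)) * H v := by
    refine ((integrable_comp_phase s t hc₀ hφ hφc).indicator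
      (measurableSet_Ici (a := (0 : ℝ)))).congr (ae_of_all _ fun v => ?_)
    by_cases hv : v ∈ Set.Ici (0 : ℝ) <;> simp [hH, hv]
  have hv : ∫ v, φ (t - 2 / c₀ * √((v - s) ^ 2 + 1)) * H v =
      ∫ w₀ in Set.Iio (t - 2 / c₀),
        φ w₀ * (c₀ ^ 2 / 4 * ((t - w₀) / √(c₀ ^ 2 * (t - w₀) ^ 2 / 4 - 1))) *
          (H (s - √(c₀ ^ 2 * (w₀ - t) ^ 2 / 4 - 1)) +
            H (s + √(c₀ ^ 2 * (w₀ - t) ^ 2 / 4 - 1))) := by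
    rw [← integral_add_compl (measurableSet_Iio (a := s)) hint, Set.compl_Iio,
      integral_Ici_eq_integral_Ioi, ← hIoi, ← hIio, integral_branch s t 1 (by norm_num) hc₀,
      integral_branch s t (-1) (by norm_num) hc₀,
      ← integral_add (integrableOn_branch s t (-1) (by norm_num) hc₀ φ H hint)
        (integrableOn_branch s t 1 (by norm_num) hc₀ φ H hint)]
    refine integral_congr_ae (ae_of_all _ fun w => ?_)
    simp only [one_mul, neg_one_mul, ← sub_eq_add_neg, ← mul_add, sub_sq_comm w t]
  have hu : ∫ u, f u * Set.indicator (Set.Ioo 0 π) (fun _ => (1 : ℝ)) u =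
      ∫ u in (0:ℝ)..π, f u := by
    rw [intervalIntegral.integral_of_le pi_pos.le, integral_Ioc_eq_integral_Ioo,
      ← integral_indicator measurableSet_Ioo]
    refine integral_congr_ae (ae_of_all _ fun u => ?_)
    by_cases hu : u ∈ Set.Ioo 0 π <;> simp [hu]
  rw [← hv, ← hu, ← integral_prod_mul, ← Measure.volume_eq_prod]
  refine integral_congr_ae (ae_of_all _ fun p => ?_)
  simp only
  ring
end

section
/- Let ψ(u,v) = (cos u, v, 1 − sin u) and γ(s) = (0, s, 1), and let c₀ > 0. Let f : ℝ → ℝ be continuous with compact support contained in (0,π) and with ∫₀^π f(u) du = 0. Then for every s, t ∈ ℝ and every continuous compactly supported φ : ℝ → ℝ, ∫_{ℝ²} φ(t − (2/c₀)·‖ψ(u,v) − γ(s)‖)·f(u)·1_{(0,π)}(u)·1_{[0,∞)}(v) du dv = 0. That is, the (mollified) SAR data produced by the singular reflectivity V(u,v) = f(u)·H(v) vanishes identically: the singularities along the infinite family of degenerate mirror points cancel. -/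
/-!
The flight path is the axis of the cylinder, so the distance from `γcyl s` to `ψcyl (u, v)` is
`√(1 + (v - s)²)`, which does not depend on the angle `u` (`norm_ψcyl_sub_γcyl`). The integrand
is therefore a product of a function of `u` and a function of `v`, and the integral over the plane
factors. The `u` factor is `∫₀^π f = 0`.
-/

open MeasureTheory Real

/-- The cylindrical topography `ψ(u,v) = (cos u, v, 1 − sin u)`. -/
noncomputable def ψcyl : ℝ × ℝ → EuclideanSpace ℝ (Fin 3) :=
  fun p => (WithLp.equiv 2 (Fin 3 → ℝ)).symm ![Real.cos p.1, p.2, 1 - Real.sin p.1]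

/-- The flight path `γ(s) = (0, s, 1)` along the cylinder's axis. -/
noncomputable def γcyl : ℝ → EuclideanSpace ℝ (Fin 3) :=
  fun s => (WithLp.equiv 2 (Fin 3 → ℝ)).symm ![0, s, 1]

theorem norm_ψcyl_sub_γcyl (u v s : ℝ) :
    ‖ψcyl (u, v) - γcyl s‖ = √(1 + (v - s) ^ 2) := by
  rw [EuclideanSpace.norm_eq]
  congr 1
  simp only [ψcyl, γcyl, Fin.sum_univ_three, Real.norm_eq_abs, sq_abs]
  simp
  nlinarith [Real.sin_sq_add_cos_sq u]

/-- Cancellation of singularities on the cylinder: if `f` is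
continuous, compactly supported in `(0,π)`, and `∫₀^π f = 0`, then the
(mollified) SAR data of the reflectivity `V(u,v) = f(u)·H(v)` vanishes
identically: for all `s, t` and all continuous compactly supported `φ`,
`∫ φ(t − (2/c₀)‖ψ(u,v) − γ(s)‖)·f(u)·1_{(0,π)}(u)·1_{[0,∞)}(v) du dv = 0`. -/
theorem cancellation_of_singularities (c₀ : ℝ) (hc₀ : 0 < c₀)
    (f : ℝ → ℝ) (hf : Continuous f) (hfc : HasCompactSupport f)
    (hfsupp : tsupport f ⊆ Set.Ioo 0 π)
    (hfint : ∫ u in (0:ℝ)..π, f u = 0) :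
    ∀ s t : ℝ, ∀ φ : ℝ → ℝ, Continuous φ → HasCompactSupport φ →
      ∫ p : ℝ × ℝ,
          φ (t - (2 / c₀) * ‖ψcyl (p.1, p.2) - γcyl s‖) * f p.1 *
            Set.indicator (Set.Ioo 0 π) (fun _ => (1 : ℝ)) p.1 *
            Set.indicator (Set.Ici (0 : ℝ)) (fun _ => (1 : ℝ)) p.2 = 0 := by
  intro s t φ _ _
  have hu : ∫ u : ℝ, f u * Set.indicator (Set.Ioo 0 π) (fun _ => (1 : ℝ)) u = 0 := by
    refine Eq.trans ?_ hfint
    rw [intervalIntegral.integral_of_le Real.pi_pos.le, integral_Ioc_eq_integral_Ioo,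
      ← integral_indicator measurableSet_Ioo]
    congr 1 with u
    simp [Set.indicator_apply]
  -- The factorization `integral_prod_mul` needs no integrability hypothesis.
  have hprod := integral_prod_mul (μ := (volume : Measure ℝ)) (ν := (volume : Measure ℝ))
    (fun u : ℝ => f u * Set.indicator (Set.Ioo 0 π) (fun _ => (1 : ℝ)) u)
    (fun v : ℝ => φ (t - (2 / c₀) * √(1 + (v - s) ^ 2)) *
      Set.indicator (Set.Ici (0 : ℝ)) (fun _ => (1 : ℝ)) v)
  rw [hu, zero_mul] at hprod
  refine Eq.trans ?_ hprod
  refine integral_congr_ae (Filter.Eventually.of_forall fun p => ?_)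
  simp only [norm_ψcyl_sub_γcyl]
  ring
end
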